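/- Let n ≥ 1 and let (f_0,f_1) be a nonzero pair in the analytic class 𝒜_{L²}: f_0 ∈ H¹(ℝⁿ), f_1 ∈ L²(ℝⁿ), (f_0,f_1) ≠ (0,0), and there exists η > 0 with ∫_{ℝⁿ} ( |ξ|² |f̂_0(ξ)|² + |f̂_1(ξ)|² ) e^{η|ξ|} dξ < ∞. Then (f_0,f_1) belongs to the Pohozhaev class 𝒫: f_0, f_1 ∈ H^σ(ℝⁿ) for every σ ≥ 0, and limsup_{j→∞} 2^j ( ∫_{ℝⁿ} |ξ|^{4·2^j + 2} |f̂_0(ξ)|² dξ + ∫_{ℝⁿ} |ξ|^{4·2^j} |f̂_1(ξ)|² dξ )^{−1/2^{j+2}} > 0. -/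

import Mathlib

open MeasureTheory Filter
open scoped ENNReal NNReal

noncomputable section

/-!
The condition defining `𝒜_{L²}` says that the norm has a finite exponential moment for the energy
measure `ν = (|ξ|² |f̂₀|² + |f̂₁|²) dξ`, and the quantity in the definition of `𝒫` is the moment
`∫ |ξ|^m dν` with `m = 2^(j+2)`. From `t^m ≤ (m/η)^m e^{ηt}` one gets
`(∫ |ξ|^m dν)^{1/m} ≤ (m/η) max(1, ∫ e^{η|ξ|} dν)`, so `m (∫ |ξ|^m dν)^{-1/m}` stays bounded
below. The factor `|ξ|²` in front of `|f̂₀|²` can be small only in the unit ball, where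
integrability of `|f̂₀|²` makes up for it; both transforms thus have exponentially weighted `L²`
bounds, which dominate every Sobolev norm.
-/

section RealBounds

lemma pow_le_div_pow_mul_exp (m : ℕ) {η t : ℝ} (hη : 0 < η) (ht : 0 ≤ t) :
    t ^ m ≤ (m / η) ^ m * Real.exp (η * t) := by
  simpa [abs_of_pos hη, abs_of_nonneg ht] using
    ProbabilityTheory.rpow_abs_le_mul_exp_abs t m.cast_nonneg hη.ne'

lemma exists_one_add_sq_rpow_le_mul_exp (σ : ℝ) {η : ℝ} (hη : 0 < η) :
    ∃ K : ℝ, ∀ t : ℝ, 0 ≤ t → (1 + t ^ 2) ^ σ ≤ K * Real.exp (η * t) := by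
  obtain ⟨m, hm⟩ := exists_nat_ge σ
  refine ⟨((2 * m : ℕ) / η) ^ (2 * m) * Real.exp η, fun t ht => ?_⟩
  calc (1 + t ^ 2) ^ σ
      ≤ (1 + t ^ 2) ^ (m : ℝ) := Real.rpow_le_rpow_of_exponent_le (by nlinarith) hm
    _ = (1 + t ^ 2) ^ m := Real.rpow_natCast _ _
    _ ≤ ((1 + t) ^ 2) ^ m := by gcongr; nlinarith
    _ = (1 + t) ^ (2 * m) := (pow_mul _ _ _).symm
    _ ≤ ((2 * m : ℕ) / η) ^ (2 * m) * Real.exp (η * (1 + t)) :=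
        pow_le_div_pow_mul_exp _ hη (by positivity)
    _ = ((2 * m : ℕ) / η) ^ (2 * m) * Real.exp η * Real.exp (η * t) := by
        rw [mul_add, mul_one, Real.exp_add, mul_assoc]

lemma exp_mul_le_exp_add_sq_mul_exp {η : ℝ} (hη : 0 ≤ η) (t : ℝ) :
    Real.exp (η * t) ≤ Real.exp η + t ^ 2 * Real.exp (η * t) := by
  rcases le_total t 1 with ht | ht
  · have h_exp : Real.exp (η * t) ≤ Real.exp η :=
      Real.exp_le_exp.2 (mul_le_of_le_one_right hη ht)
    exact le_add_of_le_of_nonneg h_exp (by positivity)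
  · have h_exp : Real.exp (η * t) ≤ t ^ 2 * Real.exp (η * t) :=
      le_mul_of_one_le_left (Real.exp_nonneg _) (one_le_pow₀ ht)
    exact le_add_of_nonneg_of_le (Real.exp_nonneg _) h_exp

lemma div_max_one_le_mul_rpow {m : ℕ} (hm : m ≠ 0) {η C S : ℝ} (hη : 0 < η) (hS : 0 < S)
    (hSC : S ≤ (m / η) ^ m * C) : η / max 1 C ≤ m * S ^ (-(1 : ℝ) / m) := by
  have hS_pow : S ≤ (m / η * max 1 C) ^ m :=
    calc S ≤ (m / η) ^ m * C := hSC
      _ ≤ (m / η) ^ m * max 1 C ^ m := by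
          gcongr
          exact (le_max_right 1 C).trans (le_self_pow₀ (le_max_left 1 C) hm)
      _ = (m / η * max 1 C) ^ m := (mul_pow _ _ _).symm
  have hS_root : S ^ (m : ℝ)⁻¹ ≤ m / η * max 1 C :=
    (Real.rpow_le_rpow hS.le hS_pow (by positivity)).trans_eq
      (Real.pow_rpow_inv_natCast (by positivity) hm)
  calc η / max 1 C = m * (m / η * max 1 C)⁻¹ := by field_simp
    _ ≤ m * (S ^ (m : ℝ)⁻¹)⁻¹ := by gcongr
    _ = m * S ^ (-(1 : ℝ) / m) := by rw [← Real.rpow_neg hS.le, neg_div, one_div]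

end RealBounds

section Moments

open ProbabilityTheory

variable {Ω : Type*} [MeasurableSpace Ω] {ν : Measure Ω} {X : Ω → ℝ} {η : ℝ}

lemma integrable_pow_of_nonneg_of_integrable_exp_mul (hX : 0 ≤ᵐ[ν] X) (hη : 0 < η)
    (h_exp : Integrable (fun ω => Real.exp (η * X ω)) ν) (m : ℕ) :
    Integrable (fun ω => X ω ^ m) ν := by
  have hX_meas : AEMeasurable X ν :=
    Real.aemeasurable_of_aemeasurable_exp_mul hη.ne' h_exp.aemeasurable
  have h_exp_neg : Integrable (fun ω => Real.exp (-η * X ω)) ν := by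
    refine h_exp.mono' (by fun_prop) ?_
    filter_upwards [hX] with ω hω
    rw [Real.norm_of_nonneg (Real.exp_nonneg _), Real.exp_le_exp]
    exact mul_le_mul_of_nonneg_right (by linarith) hω
  exact integrable_pow_of_integrable_exp_mul hη.ne' h_exp h_exp_neg m

lemma integral_pow_le_div_pow_mul_mgf (hX : 0 ≤ᵐ[ν] X) (hη : 0 < η)
    (h_exp : Integrable (fun ω => Real.exp (η * X ω)) ν) (m : ℕ) :
    ∫ ω, X ω ^ m ∂ν ≤ (m / η) ^ m * mgf X ν η := by
  rw [mgf, ← integral_const_mul]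
  refine integral_mono_ae (integrable_pow_of_nonneg_of_integrable_exp_mul hX hη h_exp m)
    (h_exp.const_mul _) ?_
  filter_upwards [hX] with ω hω using pow_le_div_pow_mul_exp m hη hω

lemma integral_pow_pos_of_nonneg_of_not_ae_eq_zero (hX : 0 ≤ᵐ[ν] X) (hX_ne : ¬ X =ᵐ[ν] 0) {m : ℕ}
    (hX_int : Integrable (fun ω => X ω ^ m) ν) : 0 < ∫ ω, X ω ^ m ∂ν := by
  have h_pow_nonneg : 0 ≤ᵐ[ν] fun ω => X ω ^ m := by
    filter_upwards [hX] with ω hω using pow_nonneg hω m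
  refine (integral_nonneg_of_ae h_pow_nonneg).lt_of_ne' fun h_zero => hX_ne ?_
  filter_upwards [(integral_eq_zero_iff_of_nonneg_ae h_pow_nonneg hX_int).1 h_zero] with ω hω
  exact eq_zero_of_pow_eq_zero hω

lemma div_max_one_mgf_le_mul_integral_pow_rpow (hX : 0 ≤ᵐ[ν] X) (hX_ne : ¬ X =ᵐ[ν] 0)
    (hη : 0 < η) (h_exp : Integrable (fun ω => Real.exp (η * X ω)) ν) {m : ℕ} (hm : m ≠ 0) :
    η / max 1 (mgf X ν η) ≤ m * (∫ ω, X ω ^ m ∂ν) ^ (-(1 : ℝ) / m) :=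
  div_max_one_le_mul_rpow hm hη
    (integral_pow_pos_of_nonneg_of_not_ae_eq_zero hX hX_ne
      (integrable_pow_of_nonneg_of_integrable_exp_mul hX hη h_exp m))
    (integral_pow_le_div_pow_mul_mgf hX hη h_exp m)

end Moments

section Weights

variable {E G : Type*} [NormedAddCommGroup E] [MeasurableSpace E] [NormedAddCommGroup G]
  {μ : Measure E} {F : E → G} {η : ℝ}

lemma lintegral_one_add_sq_rpow_mul_lt_top (hη : 0 < η)
    (hF : ∫⁻ ξ, ‖F ξ‖ₑ ^ 2 * ENNReal.ofReal (Real.exp (η * ‖ξ‖)) ∂μ < ⊤) (σ : ℝ) :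
    ∫⁻ ξ, ENNReal.ofReal ((1 + ‖ξ‖ ^ 2) ^ σ) * ‖F ξ‖ₑ ^ 2 ∂μ < ⊤ := by
  obtain ⟨K, hK⟩ := exists_one_add_sq_rpow_le_mul_exp σ hη
  calc ∫⁻ ξ, ENNReal.ofReal ((1 + ‖ξ‖ ^ 2) ^ σ) * ‖F ξ‖ₑ ^ 2 ∂μ
      ≤ ∫⁻ ξ, ENNReal.ofReal K * (‖F ξ‖ₑ ^ 2 * ENNReal.ofReal (Real.exp (η * ‖ξ‖))) ∂μ := by
        refine lintegral_mono fun ξ => ?_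
        rw [mul_left_comm, ← ENNReal.ofReal_mul' (Real.exp_nonneg _), mul_comm]
        gcongr
        exact hK _ (norm_nonneg ξ)
    _ = ENNReal.ofReal K * ∫⁻ ξ, ‖F ξ‖ₑ ^ 2 * ENNReal.ofReal (Real.exp (η * ‖ξ‖)) ∂μ :=
        lintegral_const_mul' _ _ ENNReal.ofReal_ne_top
    _ < ⊤ := ENNReal.mul_lt_top ENNReal.ofReal_lt_top hF

lemma lintegral_enorm_sq_mul_exp_lt_top (hη : 0 ≤ η) (hF_meas : AEStronglyMeasurable F μ)
    (hF : ∫⁻ ξ, ‖F ξ‖ₑ ^ 2 ∂μ < ⊤)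
    (hF_exp : ∫⁻ ξ, ‖ξ‖ₑ ^ 2 * ‖F ξ‖ₑ ^ 2 * ENNReal.ofReal (Real.exp (η * ‖ξ‖)) ∂μ < ⊤) :
    ∫⁻ ξ, ‖F ξ‖ₑ ^ 2 * ENNReal.ofReal (Real.exp (η * ‖ξ‖)) ∂μ < ⊤ := by
  have h_weight (ξ : E) : ENNReal.ofReal (Real.exp (η * ‖ξ‖)) ≤
      ENNReal.ofReal (Real.exp η) + ‖ξ‖ₑ ^ 2 * ENNReal.ofReal (Real.exp (η * ‖ξ‖)) := by
    rw [← ofReal_norm, ← ENNReal.ofReal_pow (norm_nonneg ξ), ← ENNReal.ofReal_mul (by positivity),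
      ← ENNReal.ofReal_add (by positivity) (by positivity)]
    exact ENNReal.ofReal_le_ofReal (exp_mul_le_exp_add_sq_mul_exp hη ‖ξ‖)
  calc ∫⁻ ξ, ‖F ξ‖ₑ ^ 2 * ENNReal.ofReal (Real.exp (η * ‖ξ‖)) ∂μ
      ≤ ∫⁻ ξ, (ENNReal.ofReal (Real.exp η) * ‖F ξ‖ₑ ^ 2 +
          ‖ξ‖ₑ ^ 2 * ‖F ξ‖ₑ ^ 2 * ENNReal.ofReal (Real.exp (η * ‖ξ‖))) ∂μ := by
        refine lintegral_mono fun ξ => (mul_le_mul_right (h_weight ξ) _).trans_eq ?_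
        ring
    _ = ENNReal.ofReal (Real.exp η) * ∫⁻ ξ, ‖F ξ‖ₑ ^ 2 ∂μ +
          ∫⁻ ξ, ‖ξ‖ₑ ^ 2 * ‖F ξ‖ₑ ^ 2 * ENNReal.ofReal (Real.exp (η * ‖ξ‖)) ∂μ := by
        rw [lintegral_add_left' (by fun_prop), lintegral_const_mul' _ _ ENNReal.ofReal_ne_top]
    _ < ⊤ := ENNReal.add_lt_top.2 ⟨ENNReal.mul_lt_top ENNReal.ofReal_lt_top hF, hF_exp⟩

end Weights

section EnergyMeasure

variable {E G₀ G₁ : Type*} [NormedAddCommGroup E] [MeasurableSpace E]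
  [NormedAddCommGroup G₀] [NormedAddCommGroup G₁] {μ : Measure E} {F₀ : E → G₀} {F₁ : E → G₁}

/-- The energy distribution `(|ξ|² |f̂₀|² + |f̂₁|²) dξ` of the Cauchy data `(f₀, f₁)` in frequency
space, where `F₀ = f̂₀` and `F₁ = f̂₁`. The classes `𝒜_{L²}` and `𝒫` constrain its exponential and
polynomial moments. It is encoded as a sum of two measures, so that integrals split over the two
terms without measurability conditions. -/
def energyMeasure (μ : Measure E) (F₀ : E → G₀) (F₁ : E → G₁) : Measure E :=
  μ.withDensity (fun ξ => ‖ξ‖ₑ ^ 2 * ‖F₀ ξ‖ₑ ^ 2) + μ.withDensity (fun ξ => ‖F₁ ξ‖ₑ ^ 2)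

variable [OpensMeasurableSpace E]

lemma ae_eq_zero_of_norm_ae_eq_zero_energyMeasure (hμ : μ {0} = 0)
    (hF₀ : AEStronglyMeasurable F₀ μ) (hF₁ : AEStronglyMeasurable F₁ μ)
    (h_norm : (fun ξ => ‖ξ‖) =ᵐ[energyMeasure μ F₀ F₁] 0) : F₀ =ᵐ[μ] 0 ∧ F₁ =ᵐ[μ] 0 := by
  have h_ne : ∀ᵐ ξ ∂μ, ξ ≠ 0 := by simpa [ae_iff] using hμ
  obtain ⟨h₀, h₁⟩ := ae_add_measure_iff.1 h_norm
  rw [ae_withDensity_iff' (by fun_prop)] at h₀ h₁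
  constructor
  · filter_upwards [h_ne, h₀] with ξ hξ hξ₀
    simpa [hξ] using hξ₀
  · filter_upwards [h_ne, h₁] with ξ hξ hξ₁
    simpa [hξ] using hξ₁

lemma integrable_exp_mul_norm_energyMeasure {η : ℝ}
    (hF₀ : AEStronglyMeasurable F₀ μ) (hF₁ : AEStronglyMeasurable F₁ μ)
    (h₀ : ∫⁻ ξ, ‖ξ‖ₑ ^ 2 * ‖F₀ ξ‖ₑ ^ 2 * ENNReal.ofReal (Real.exp (η * ‖ξ‖)) ∂μ < ⊤)
    (h₁ : ∫⁻ ξ, ‖F₁ ξ‖ₑ ^ 2 * ENNReal.ofReal (Real.exp (η * ‖ξ‖)) ∂μ < ⊤) :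
    Integrable (fun ξ => Real.exp (η * ‖ξ‖)) (energyMeasure μ F₀ F₁) := by
  refine ⟨by fun_prop, ?_⟩
  rw [hasFiniteIntegral_iff_ofReal (ae_of_all _ fun ξ => Real.exp_nonneg _), energyMeasure,
    lintegral_add_measure, lintegral_withDensity_eq_lintegral_mul₀ (by fun_prop) (by fun_prop),
    lintegral_withDensity_eq_lintegral_mul₀ (by fun_prop) (by fun_prop)]
  exact ENNReal.add_lt_top.2 ⟨h₀, h₁⟩

lemma integral_norm_pow_energyMeasure
    (hF₀ : AEStronglyMeasurable F₀ μ) (hF₁ : AEStronglyMeasurable F₁ μ) {m : ℕ}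
    (h_int : Integrable (fun ξ => ‖ξ‖ ^ m) (energyMeasure μ F₀ F₁)) :
    ∫ ξ, ‖ξ‖ ^ m ∂energyMeasure μ F₀ F₁ =
      (∫ ξ, ‖ξ‖ ^ (m + 2) * ‖F₀ ξ‖ ^ 2 ∂μ) + ∫ ξ, ‖ξ‖ ^ m * ‖F₁ ξ‖ ^ 2 ∂μ := by
  obtain ⟨h_int₀, h_int₁⟩ := integrable_add_measure.1 h_int
  rw [energyMeasure, integral_add_measure h_int₀ h_int₁,
    integral_withDensity_eq_integral_toReal_smul₀ (by fun_prop)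
      (ae_of_all _ fun ξ => by finiteness),
    integral_withDensity_eq_integral_toReal_smul₀ (by fun_prop)
      (ae_of_all _ fun ξ => by finiteness)]
  congr 1 <;> refine integral_congr_ae (ae_of_all _ fun ξ => ?_)
  · simp only [ENNReal.toReal_mul, ENNReal.toReal_pow, toReal_enorm, smul_eq_mul]
    ring
  · simp only [ENNReal.toReal_pow, toReal_enorm, smul_eq_mul, mul_comm]

lemma exists_pos_le_mul_moment_rpow {η : ℝ} (hμ : μ {0} = 0)
    (hF₀ : AEStronglyMeasurable F₀ μ) (hF₁ : AEStronglyMeasurable F₁ μ)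
    (hne : ¬ (F₀ =ᵐ[μ] 0 ∧ F₁ =ᵐ[μ] 0)) (hη : 0 < η)
    (h_exp : Integrable (fun ξ => Real.exp (η * ‖ξ‖)) (energyMeasure μ F₀ F₁)) :
    ∃ c > 0, ∀ m : ℕ, m ≠ 0 → c ≤ m * ((∫ ξ, ‖ξ‖ ^ (m + 2) * ‖F₀ ξ‖ ^ 2 ∂μ) +
      ∫ ξ, ‖ξ‖ ^ m * ‖F₁ ξ‖ ^ 2 ∂μ) ^ (-(1 : ℝ) / m) := by
  have h_nonneg : 0 ≤ᵐ[energyMeasure μ F₀ F₁] fun ξ => ‖ξ‖ := ae_of_all _ norm_nonneg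
  have h_norm_ne : ¬ (fun ξ => ‖ξ‖) =ᵐ[energyMeasure μ F₀ F₁] 0 := fun h =>
    hne (ae_eq_zero_of_norm_ae_eq_zero_energyMeasure hμ hF₀ hF₁ h)
  refine ⟨η / max 1 (ProbabilityTheory.mgf (fun ξ => ‖ξ‖) (energyMeasure μ F₀ F₁) η),
    by positivity, fun m hm => ?_⟩
  rw [← integral_norm_pow_energyMeasure hF₀ hF₁
    (integrable_pow_of_nonneg_of_integrable_exp_mul h_nonneg hη h_exp m)]
  exact div_max_one_mgf_le_mul_integral_pow_rpow h_nonneg h_norm_ne hη h_exp hm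

theorem analytic_subset_pohozhaev_general (hμ : μ {0} = 0)
    (hF₀ : AEStronglyMeasurable F₀ μ) (hF₁ : AEStronglyMeasurable F₁ μ)
    (hL2 : ∫⁻ ξ, ‖F₀ ξ‖ₑ ^ 2 ∂μ < ⊤) (hne : ¬ (F₀ =ᵐ[μ] 0 ∧ F₁ =ᵐ[μ] 0))
    (hA : ∃ η > (0 : ℝ), ∫⁻ ξ, (‖ξ‖ₑ ^ 2 * ‖F₀ ξ‖ₑ ^ 2 + ‖F₁ ξ‖ₑ ^ 2) *
      ENNReal.ofReal (Real.exp (η * ‖ξ‖)) ∂μ < ⊤) :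
    (∀ σ : ℝ,
      (∫⁻ ξ, ENNReal.ofReal ((1 + ‖ξ‖ ^ 2) ^ σ) * ‖F₀ ξ‖ₑ ^ 2 ∂μ < ⊤) ∧
      (∫⁻ ξ, ENNReal.ofReal ((1 + ‖ξ‖ ^ 2) ^ σ) * ‖F₁ ξ‖ₑ ^ 2 ∂μ < ⊤)) ∧
    0 < liminf (fun j : ℕ => ENNReal.ofReal ((2 : ℝ) ^ j *
        ((∫ ξ, ‖ξ‖ ^ (4 * 2 ^ j + 2) * ‖F₀ ξ‖ ^ 2 ∂μ) +
         (∫ ξ, ‖ξ‖ ^ (4 * 2 ^ j) * ‖F₁ ξ‖ ^ 2 ∂μ)) ^ (-(1 : ℝ) / 2 ^ (j + 2)))) atTop := by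
  obtain ⟨η, hη, hA⟩ := hA
  have h₀ : ∫⁻ ξ, ‖ξ‖ₑ ^ 2 * ‖F₀ ξ‖ₑ ^ 2 * ENNReal.ofReal (Real.exp (η * ‖ξ‖)) ∂μ < ⊤ :=
    (lintegral_mono fun ξ => by gcongr; exact le_self_add).trans_lt hA
  have h₁ : ∫⁻ ξ, ‖F₁ ξ‖ₑ ^ 2 * ENNReal.ofReal (Real.exp (η * ‖ξ‖)) ∂μ < ⊤ :=
    (lintegral_mono fun ξ => by gcongr; exact le_add_self).trans_lt hA
  refine ⟨fun σ => ⟨lintegral_one_add_sq_rpow_mul_lt_top hη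
    (lintegral_enorm_sq_mul_exp_lt_top hη.le hF₀ hL2 h₀) σ,
    lintegral_one_add_sq_rpow_mul_lt_top hη h₁ σ⟩, ?_⟩
  obtain ⟨c, hc, hc_le⟩ := exists_pos_le_mul_moment_rpow hμ hF₀ hF₁ hne hη
    (integrable_exp_mul_norm_energyMeasure hF₀ hF₁ h₀ h₁)
  refine (ENNReal.ofReal_pos.2 (div_pos hc four_pos)).trans_le
    (le_liminf_of_le (h := Eventually.of_forall fun j => ENNReal.ofReal_le_ofReal ?_))
  have h_cast : ((4 * 2 ^ j : ℕ) : ℝ) = 2 ^ (j + 2) := by push_cast; ring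
  have h_moment := hc_le (4 * 2 ^ j) (by positivity)
  rw [h_cast, pow_add] at h_moment
  rw [pow_add]
  linarith

end EnergyMeasure

/-- the inclusion `𝒜_{L²} ⊂ 𝒫` (nonzero analytic data belong to the
Pohozhaev class), stated on the Fourier side: `F0 = f̂_0`, `F1 = f̂_1`. -/
theorem analytic_subset_pohozhaev
    (n : ℕ) (hn : 1 ≤ n)
    (F0 F1 : EuclideanSpace ℝ (Fin n) → ℂ)
    (hm0 : AEMeasurable F0 (volume : Measure (EuclideanSpace ℝ (Fin n))))
    (hm1 : AEMeasurable F1 (volume : Measure (EuclideanSpace ℝ (Fin n))))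
    -- f_0 ∈ H¹(ℝⁿ)
    (hH1 : ∫⁻ ξ, ENNReal.ofReal (1 + ‖ξ‖ ^ 2) * (‖F0 ξ‖₊ : ℝ≥0∞) ^ 2 < ⊤)
    -- f_1 ∈ L²(ℝⁿ)
    (hL2 : ∫⁻ ξ, (‖F1 ξ‖₊ : ℝ≥0∞) ^ 2 < ⊤)
    -- (f_0, f_1) ≠ (0, 0)
    (hne : ¬ (F0 =ᵐ[(volume : Measure (EuclideanSpace ℝ (Fin n)))] 0 ∧
              F1 =ᵐ[(volume : Measure (EuclideanSpace ℝ (Fin n)))] 0))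
    -- the analyticity condition of `𝒜_{L²}`
    (hA : ∃ η > (0:ℝ), ∫⁻ ξ,
      ((‖ξ‖₊ : ℝ≥0∞) ^ 2 * (‖F0 ξ‖₊ : ℝ≥0∞) ^ 2 + (‖F1 ξ‖₊ : ℝ≥0∞) ^ 2) *
        ENNReal.ofReal (Real.exp (η * ‖ξ‖)) < ⊤) :
    -- conclusion: (f_0, f_1) ∈ 𝒫
    (∀ σ : ℝ, 0 ≤ σ →
      (∫⁻ ξ, ENNReal.ofReal ((1 + ‖ξ‖ ^ 2) ^ σ) * (‖F0 ξ‖₊ : ℝ≥0∞) ^ 2 < ⊤) ∧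
      (∫⁻ ξ, ENNReal.ofReal ((1 + ‖ξ‖ ^ 2) ^ σ) * (‖F1 ξ‖₊ : ℝ≥0∞) ^ 2 < ⊤)) ∧
    0 < Filter.limsup (fun j : ℕ => ENNReal.ofReal ((2:ℝ) ^ j *
        ((∫ ξ, ‖ξ‖ ^ (4 * 2 ^ j + 2) * ‖F0 ξ‖ ^ 2) +
         (∫ ξ, ‖ξ‖ ^ (4 * 2 ^ j) * ‖F1 ξ‖ ^ 2)) ^ (-(1:ℝ) / 2 ^ (j + 2))))
      Filter.atTop := by
  have : Nonempty (Fin n) := Fin.pos_iff_nonempty.1 hn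
  have hF0 : ∫⁻ ξ, ‖F0 ξ‖ₑ ^ 2 < ⊤ :=
    (lintegral_mono fun ξ => le_mul_of_one_le_left' (by simp)).trans_lt hH1
  obtain ⟨h_sobolev, h_liminf⟩ := analytic_subset_pohozhaev_general (measure_singleton 0)
    hm0.aestronglyMeasurable hm1.aestronglyMeasurable hF0 hne hA
  exact ⟨fun σ _ => h_sobolev σ, h_liminf.trans_le liminf_le_limsup⟩
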